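/- Let (σ_j)_{j≥1} be a sequence of positive real numbers satisfying σ_j²/(β j^α) → 1 as j → ∞ for some constants α > 0 and β > 0, let ω_j = ω(σ_j), and let n_d(ε) be the average case approximation complexity built from (ω_j). If α > 1, then for every ε ∈ (0,1), sup_{d∈ℕ} n_d(ε) < ∞. If α ≤ 1, then for every ε ∈ (0,1), n_d(ε) → ∞ as d → ∞. -/

import Mathlib

open Filter Set

/-- `ω(σ) = (1 + (σ²/2)(1 + √(1 + 4/σ²)))⁻¹`. -/
noncomputable def omegaFn (σ : ℝ) : ℝ :=
  (1 + σ ^ 2 / 2 * (1 + Real.sqrt (1 + 4 / σ ^ 2)))⁻¹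

/-- The average case approximation complexity `n_d(ε)` built from the sequence `ω`:
the minimal number `n ≥ 1` such that some finite set `S` of multi-indices with `|S| ≤ n`
captures all but `ε²` of the total mass of the eigenvalues
`λ_d(k) = ∏_{j<d} (1 - ω_j) ω_j^{k_j}`, `k : Fin d → ℕ`. -/
noncomputable def avgComplexity (ω : ℕ → ℝ) (d : ℕ) (ε : ℝ) : ℕ :=
  sInf {n : ℕ | 1 ≤ n ∧ ∃ S : Finset (Fin d → ℕ), S.card ≤ n ∧
    ∑' k : {k : Fin d → ℕ // k ∉ S}, ∏ j : Fin d, (1 - ω j.1) * ω j.1 ^ k.1 j ≤ ε ^ 2}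

/-!
Everything depends on whether `∑ ω_j` converges. Every eigenvalue is at most `∏_{j<d} (1 - ω_j)`,
so capturing mass `1 - ε²` takes at least `(1 - ε²) / ∏_{j<d} (1 - ω_j)` of them, which tends to
infinity when `∑ ω_j = ∞`. The box `{k : k_j < m_j}` has mass `∏_{j<d} (1 - ω_j ^ m_j)`, hence loses
at most `∑_j ω_j ^ m_j`. With `m_j = M` for `j < M` and `m_j = 1` otherwise, the box has at most
`M ^ M` elements for every `d`, and when `∑ ω_j < ∞` its loss tends to `0` as `M → ∞` by dominated
convergence. Finally `ω(σ)` lies between `1 / (σ² + 2)` and `1 / (σ² + 1)`, so for `σ_j²` of order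
`j ^ α` the series `∑ ω_j` converges exactly when `α > 1`.
-/

theorem one_sub_sum_le_prod_one_sub {ι : Type*} {s : Finset ι} {a : ι → ℝ}
    (h0 : ∀ i ∈ s, 0 ≤ a i) (h1 : ∀ i ∈ s, a i ≤ 1) :
    1 - ∑ i ∈ s, a i ≤ ∏ i ∈ s, (1 - a i) := by
  induction s using Finset.cons_induction with
  | empty => simp
  | cons i s hi ih =>
    rw [Finset.forall_mem_cons] at h0 h1
    rw [Finset.sum_cons, Finset.prod_cons]
    have hs : 0 ≤ ∑ j ∈ s, a j := Finset.sum_nonneg h0.2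
    calc 1 - (a i + ∑ j ∈ s, a j)
        ≤ (1 - a i) * (1 - ∑ j ∈ s, a j) := by linarith [mul_nonneg h0.1 hs]
      _ ≤ (1 - a i) * ∏ j ∈ s, (1 - a j) :=
        mul_le_mul_of_nonneg_left (ih h0.2 h1.2) (sub_nonneg.2 h1.1)

theorem prod_one_sub_le_exp_neg_sum {ι : Type*} {s : Finset ι} {a : ι → ℝ}
    (h1 : ∀ i ∈ s, a i ≤ 1) : ∏ i ∈ s, (1 - a i) ≤ Real.exp (-∑ i ∈ s, a i) := by
  rw [← Finset.sum_neg_distrib, Real.exp_sum]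
  exact Finset.prod_le_prod (fun i hi ↦ sub_nonneg.2 (h1 i hi))
    fun i _ ↦ Real.one_sub_le_exp_neg (a i)

theorem tendsto_prod_one_sub_nhds_zero_of_not_summable {a : ℕ → ℝ} (h0 : ∀ j, 0 ≤ a j)
    (h1 : ∀ j, a j ≤ 1) (ha : ¬Summable a) :
    Tendsto (fun d ↦ ∏ j ∈ Finset.range d, (1 - a j)) atTop (nhds 0) :=
  squeeze_zero (fun _ ↦ Finset.prod_nonneg fun j _ ↦ sub_nonneg.2 (h1 j))
    (fun _ ↦ prod_one_sub_le_exp_neg_sum fun j _ ↦ h1 j)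
    (Real.tendsto_exp_neg_atTop_nhds_zero.comp
      ((not_summable_iff_tendsto_nat_atTop_of_nonneg h0).1 ha))

theorem tendsto_piFinset_range_atTop (ι : Type*) [Fintype ι] [DecidableEq ι] :
    Tendsto (fun M ↦ Fintype.piFinset fun _ : ι ↦ Finset.range M) atTop atTop := by
  refine tendsto_atTop_finset_of_monotone
    (fun M N hMN ↦ Fintype.piFinset_subset _ _ fun _ ↦ Finset.range_mono hMN) fun k ↦ ?_
  refine ⟨Finset.univ.sup k + 1, Fintype.mem_piFinset.2 fun j ↦ ?_⟩
  exact Finset.mem_range.2 (Nat.lt_succ_of_le (Finset.le_sup (Finset.mem_univ j)))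

section TensorEigenvalue

variable {ι : Type*} [Fintype ι] {ω : ι → ℝ}

/-- The eigenvalue `λ(k) = ∏ j, (1 - ω_j) ω_j ^ k_j` of the tensor product covariance operator,
with multi-indices starting at `0`: the paper's `k_j - 1` is `k j` here. -/
noncomputable def tensorEigenvalue (ω : ι → ℝ) (k : ι → ℕ) : ℝ :=
  ∏ j, (1 - ω j) * ω j ^ k j

theorem tensorEigenvalue_nonneg (h0 : ∀ j, 0 ≤ ω j) (h1 : ∀ j, ω j ≤ 1) (k : ι → ℕ) :
    0 ≤ tensorEigenvalue ω k :=
  Finset.prod_nonneg fun j _ ↦ mul_nonneg (sub_nonneg.2 (h1 j)) (pow_nonneg (h0 j) _)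

theorem tensorEigenvalue_le_prod_one_sub (h0 : ∀ j, 0 ≤ ω j) (h1 : ∀ j, ω j ≤ 1) (k : ι → ℕ) :
    tensorEigenvalue ω k ≤ ∏ j, (1 - ω j) :=
  Finset.prod_le_prod (fun j _ ↦ mul_nonneg (sub_nonneg.2 (h1 j)) (pow_nonneg (h0 j) _))
    fun j _ ↦ mul_le_of_le_one_right (sub_nonneg.2 (h1 j)) (pow_le_one₀ (h0 j) (h1 j))

theorem sum_piFinset_range_tensorEigenvalue [DecidableEq ι] (ω : ι → ℝ) (m : ι → ℕ) :
    ∑ k ∈ Fintype.piFinset fun j ↦ Finset.range (m j), tensorEigenvalue ω k =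
      ∏ j, (1 - ω j ^ m j) := by
  simp only [tensorEigenvalue, ← mul_neg_geom_sum, Finset.mul_sum, Finset.prod_univ_sum]

theorem hasSum_tensorEigenvalue (h0 : ∀ j, 0 ≤ ω j) (h1 : ∀ j, ω j < 1) :
    HasSum (tensorEigenvalue ω) 1 := by
  classical
  have hmono : Monotone fun S ↦ ∑ k ∈ S, tensorEigenvalue ω k := fun _ _ hST ↦
    Finset.sum_le_sum_of_subset_of_nonneg hST fun k _ _ ↦
      tensorEigenvalue_nonneg h0 (fun j ↦ (h1 j).le) k
  have hboxes : Tendsto (fun M : ℕ ↦ ∏ j, (1 - ω j ^ M)) atTop (nhds (∏ _j : ι, (1 - 0))) :=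
    tendsto_finsetProd _ fun j _ ↦
      tendsto_const_nhds.sub (tendsto_pow_atTop_nhds_zero_of_lt_one (h0 j) (h1 j))
  simp only [sub_zero, Finset.prod_const_one, ← sum_piFinset_range_tensorEigenvalue] at hboxes
  exact (tendsto_iff_tendsto_subseq_of_monotone hmono (tendsto_piFinset_range_atTop ι)).2 hboxes

theorem tsum_compl_tensorEigenvalue (h0 : ∀ j, 0 ≤ ω j) (h1 : ∀ j, ω j < 1)
    (S : Finset (ι → ℕ)) :
    ∑' k : {k // k ∉ S}, tensorEigenvalue ω k = 1 - ∑ k ∈ S, tensorEigenvalue ω k := by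
  have h := hasSum_tensorEigenvalue h0 h1
  rw [← h.tsum_eq, ← h.summable.sum_add_tsum_subtype_compl S, add_sub_cancel_left]

end TensorEigenvalue

section AvgComplexity

variable {ω : ℕ → ℝ} {d : ℕ} {ε : ℝ}

theorem avgComplexity_le_of_tsum_compl_le {n : ℕ} (hn : 1 ≤ n) {S : Finset (Fin d → ℕ)}
    (hS : S.card ≤ n)
    (hε : ∑' k : {k // k ∉ S}, tensorEigenvalue (fun j : Fin d ↦ ω j) k ≤ ε ^ 2) :
    avgComplexity ω d ε ≤ n :=
  Nat.sInf_le ⟨hn, S, hS, hε⟩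

theorem exists_card_le_avgComplexity_and_tsum_compl_le (ω : ℕ → ℝ) (d : ℕ) (hε : 0 < ε) :
    ∃ S : Finset (Fin d → ℕ), S.card ≤ avgComplexity ω d ε ∧
      ∑' k : {k // k ∉ S}, tensorEigenvalue (fun j : Fin d ↦ ω j) k ≤ ε ^ 2 := by
  obtain ⟨S, hS⟩ := ((tendsto_order.1 (tendsto_tsum_compl_atTop_zero
    (tensorEigenvalue fun j : Fin d ↦ ω j))).2 (ε ^ 2) (by positivity)).exists
  exact (Nat.sInf_mem (s := {n | 1 ≤ n ∧ ∃ S : Finset (Fin d → ℕ), S.card ≤ n ∧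
    ∑' k : {k // k ∉ S}, tensorEigenvalue (fun j : Fin d ↦ ω j) k ≤ ε ^ 2})
    ⟨S.card + 1, Nat.le_add_left _ _, S, Nat.le_succ _, hS.le⟩).2

theorem one_sub_sq_le_avgComplexity_mul_prod_one_sub (h0 : ∀ j, 0 ≤ ω j) (h1 : ∀ j, ω j < 1)
    (hε : 0 < ε) :
    1 - ε ^ 2 ≤ avgComplexity ω d ε * ∏ j ∈ Finset.range d, (1 - ω j) := by
  obtain ⟨S, hcard, htail⟩ := exists_card_le_avgComplexity_and_tsum_compl_le ω d hε
  rw [tsum_compl_tensorEigenvalue (fun j : Fin d ↦ h0 j) fun j ↦ h1 j] at htail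
  calc 1 - ε ^ 2
      ≤ ∑ k ∈ S, tensorEigenvalue (fun j : Fin d ↦ ω j) k := by linarith
    _ ≤ S.card * ∏ j : Fin d, (1 - ω j) := by
      rw [← nsmul_eq_mul]
      exact Finset.sum_le_card_nsmul _ _ _ fun k _ ↦
        tensorEigenvalue_le_prod_one_sub (fun j : Fin d ↦ h0 j) (fun j ↦ (h1 j).le) k
    _ = S.card * ∏ j ∈ Finset.range d, (1 - ω j) := by
      rw [Fin.prod_univ_eq_prod_range fun j ↦ 1 - ω j]
    _ ≤ avgComplexity ω d ε * ∏ j ∈ Finset.range d, (1 - ω j) := by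
      gcongr
      exact Finset.prod_nonneg fun j _ ↦ sub_nonneg.2 (h1 j).le

theorem avgComplexity_le_prod_of_sum_pow_le (h0 : ∀ j, 0 ≤ ω j) (h1 : ∀ j, ω j < 1)
    {m : ℕ → ℕ} (hm : ∀ j, 1 ≤ m j) (hε : ∑ j ∈ Finset.range d, ω j ^ m j ≤ ε ^ 2) :
    avgComplexity ω d ε ≤ ∏ j ∈ Finset.range d, m j := by
  refine avgComplexity_le_of_tsum_compl_le (Finset.one_le_prod' fun j _ ↦ hm j)
    (S := Fintype.piFinset fun j : Fin d ↦ Finset.range (m j)) ?_ ?_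
  · simp only [Fintype.card_piFinset, Finset.card_range, Fin.prod_univ_eq_prod_range m d, le_refl]
  · rw [tsum_compl_tensorEigenvalue (fun j : Fin d ↦ h0 j) fun j ↦ h1 j,
      sum_piFinset_range_tensorEigenvalue, Fin.prod_univ_eq_prod_range fun j ↦ 1 - ω j ^ m j]
    have := one_sub_sum_le_prod_one_sub (s := Finset.range d) (a := fun j ↦ ω j ^ m j)
      (fun j _ ↦ pow_nonneg (h0 j) _) fun j _ ↦ pow_le_one₀ (h0 j) (h1 j).le
    linarith

theorem tendsto_tsum_pow_ite_lt (h0 : ∀ j, 0 ≤ ω j) (h1 : ∀ j, ω j < 1) (hω : Summable ω) :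
    Tendsto (fun M : ℕ ↦ ∑' j, ω j ^ (if j < M then M else 1)) atTop (nhds 0) := by
  rw [← tsum_zero (α := ℝ) (β := ℕ)]
  refine tendsto_tsum_of_dominated_convergence hω (fun j ↦ ?_) (.of_forall fun M j ↦ ?_)
  · refine (tendsto_pow_atTop_nhds_zero_of_lt_one (h0 j) (h1 j)).congr' ?_
    filter_upwards [eventually_gt_atTop j] with M hM
    rw [if_pos hM]
  · rw [Real.norm_of_nonneg (pow_nonneg (h0 j) _)]
    exact pow_le_of_le_one (h0 j) (h1 j).le (by split_ifs <;> omega)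

theorem prod_range_ite_lt_le_pow {M : ℕ} (hM : 1 ≤ M) (d : ℕ) :
    ∏ j ∈ Finset.range d, (if j < M then M else 1) ≤ M ^ M := by
  rw [Finset.prod_ite, Finset.prod_const, Finset.prod_const_one, mul_one]
  refine Nat.pow_le_pow_right hM ?_
  calc ((Finset.range d).filter (· < M)).card ≤ (Finset.range M).card :=
        Finset.card_le_card fun j hj ↦ Finset.mem_range.2 (Finset.mem_filter.1 hj).2
    _ = M := Finset.card_range M

theorem exists_forall_avgComplexity_le_of_summable (h0 : ∀ j, 0 ≤ ω j) (h1 : ∀ j, ω j < 1)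
    (hω : Summable ω) (hε : 0 < ε) : ∃ C, ∀ d, avgComplexity ω d ε ≤ C := by
  obtain ⟨M, hloss, hM⟩ := (((tendsto_tsum_pow_ite_lt h0 h1 hω).eventually_lt_const
    (pow_pos hε 2)).and (eventually_ge_atTop 1)).exists
  have hside : ∀ j, 1 ≤ if j < M then M else 1 := fun j ↦ by split_ifs <;> omega
  have hsummable : Summable fun j ↦ ω j ^ (if j < M then M else 1) :=
    hω.of_nonneg_of_le (fun j ↦ pow_nonneg (h0 j) _) fun j ↦
      pow_le_of_le_one (h0 j) (h1 j).le (Nat.one_le_iff_ne_zero.1 (hside j))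
  refine ⟨M ^ M, fun d ↦ ?_⟩
  calc avgComplexity ω d ε ≤ ∏ j ∈ Finset.range d, (if j < M then M else 1) :=
        avgComplexity_le_prod_of_sum_pow_le h0 h1 hside
          ((hsummable.sum_le_tsum _ fun j _ ↦ pow_nonneg (h0 j) _).trans hloss.le)
    _ ≤ M ^ M := prod_range_ite_lt_le_pow hM d

theorem tendsto_avgComplexity_atTop_of_not_summable (h0 : ∀ j, 0 ≤ ω j) (h1 : ∀ j, ω j < 1)
    (hω : ¬Summable ω) (hε : ε ∈ Ioo 0 1) :
    Tendsto (fun d ↦ avgComplexity ω d ε) atTop atTop := by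
  have hpos : ∀ d, 0 < ∏ j ∈ Finset.range d, (1 - ω j) := fun d ↦
    Finset.prod_pos fun j _ ↦ sub_pos.2 (h1 j)
  have hprod : Tendsto (fun d ↦ ∏ j ∈ Finset.range d, (1 - ω j)) atTop (nhdsWithin 0 (Ioi 0)) :=
    tendsto_nhdsWithin_iff.2
      ⟨tendsto_prod_one_sub_nhds_zero_of_not_summable h0 (fun j ↦ (h1 j).le) hω, .of_forall hpos⟩
  have hmass : 0 < 1 - ε ^ 2 := sub_pos.2 (pow_lt_one₀ hε.1.le hε.2 two_ne_zero)
  rw [← tendsto_natCast_atTop_iff (R := ℝ)]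
  refine tendsto_atTop_mono (fun d ↦ ?_) (hprod.inv_tendsto_nhdsGT_zero.const_mul_atTop hmass)
  rw [Pi.inv_apply, ← div_eq_mul_inv, div_le_iff₀ (hpos d)]
  exact one_sub_sq_le_avgComplexity_mul_prod_one_sub h0 h1 hε.1

end AvgComplexity

section OmegaFn

theorem omegaFn_le_inv_sq_add_one (σ : ℝ) : omegaFn σ ≤ (σ ^ 2 + 1)⁻¹ := by
  have hsqrt : 1 ≤ √(1 + 4 / σ ^ 2) :=
    Real.one_le_sqrt.2 (le_add_of_nonneg_right (by positivity))
  refine inv_anti₀ (by positivity) ?_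
  calc σ ^ 2 + 1 = 1 + σ ^ 2 / 2 * (1 + 1) := by ring
    _ ≤ 1 + σ ^ 2 / 2 * (1 + √(1 + 4 / σ ^ 2)) := by gcongr

theorem inv_sq_add_two_le_omegaFn (σ : ℝ) : (σ ^ 2 + 2)⁻¹ ≤ omegaFn σ := by
  have hsqrt : √(1 + 4 / σ ^ 2) ≤ 1 + 2 / σ ^ 2 := by
    refine Real.sqrt_le_iff.2 ⟨by positivity, ?_⟩
    calc 1 + 4 / σ ^ 2 ≤ 1 + 4 / σ ^ 2 + (2 / σ ^ 2) ^ 2 := le_add_of_nonneg_right (sq_nonneg _)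
      _ = (1 + 2 / σ ^ 2) ^ 2 := by ring
  refine inv_anti₀ (by positivity) ?_
  calc 1 + σ ^ 2 / 2 * (1 + √(1 + 4 / σ ^ 2))
      ≤ 1 + σ ^ 2 / 2 * (1 + (1 + 2 / σ ^ 2)) := by gcongr
    _ = 1 + σ ^ 2 + σ ^ 2 / σ ^ 2 := by ring
    _ ≤ σ ^ 2 + 2 := by linarith [div_self_le_one (σ ^ 2)]

theorem omegaFn_pos (σ : ℝ) : 0 < omegaFn σ :=
  (inv_pos.2 (by positivity)).trans_le (inv_sq_add_two_le_omegaFn σ)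

theorem omegaFn_lt_one {σ : ℝ} (hσ : σ ≠ 0) : omegaFn σ < 1 :=
  (omegaFn_le_inv_sq_add_one σ).trans_lt
    (inv_lt_one_of_one_lt₀ (lt_add_of_pos_left 1 (by positivity)))

variable {σ : ℕ → ℝ}

theorem summable_omegaFn_of_rpow_isBigO {α : ℝ} (hα : 1 < α)
    (hσ : (fun j : ℕ ↦ (j : ℝ) ^ α) =O[atTop] fun j ↦ σ j ^ 2) :
    Summable fun j ↦ omegaFn (σ j) := by
  have hinv : (fun j ↦ (σ j ^ 2 + 1)⁻¹) =O[atTop] fun j : ℕ ↦ ((j : ℝ) ^ α)⁻¹ := by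
    refine (hσ.trans (.of_norm_le fun j ↦ ?_)).inv_rev ?_
    · rw [Real.norm_of_nonneg (by positivity)]
      exact le_add_of_nonneg_right zero_le_one
    · filter_upwards [eventually_gt_atTop 0] with j hj hzero
      exact absurd hzero (by positivity)
  refine summable_of_isBigO_nat (Real.summable_nat_rpow_inv.2 hα)
    (.trans (.of_norm_le fun j ↦ ?_) hinv)
  rw [Real.norm_of_nonneg (omegaFn_pos _).le]
  exact omegaFn_le_inv_sq_add_one _

theorem not_summable_omegaFn_of_isBigO_natCast
    (hσ : (fun j ↦ σ j ^ 2) =O[atTop] fun j : ℕ ↦ (j : ℝ)) :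
    ¬Summable fun j ↦ omegaFn (σ j) := by
  intro hsummable
  have htwo : (fun _ ↦ 2 : ℕ → ℝ) =O[atTop] fun j : ℕ ↦ (j : ℝ) :=
    (Asymptotics.isLittleO_const_id_atTop 2).natCast_atTop.isBigO
  have hinv : (fun j : ℕ ↦ (j : ℝ)⁻¹) =O[atTop] fun j ↦ (σ j ^ 2 + 2)⁻¹ :=
    (hσ.add htwo).inv_rev (.of_forall fun j hzero ↦ absurd hzero (by positivity))
  refine Real.not_summable_natCast_inv
    (summable_of_isBigO_nat hsummable (hinv.trans (.of_norm_le fun j ↦ ?_)))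
  rw [Real.norm_of_nonneg (by positivity)]
  exact inv_sq_add_two_le_omegaFn _

theorem rpow_isBigO_natCast {α : ℝ} (hα : α ≤ 1) :
    (fun j : ℕ ↦ (j : ℝ) ^ α) =O[atTop] fun j : ℕ ↦ (j : ℝ) := by
  refine .of_norm_eventuallyLE ?_
  filter_upwards [eventually_ge_atTop 1] with j hj
  rw [Real.norm_of_nonneg (by positivity)]
  simpa only [Real.rpow_one] using
    Real.rpow_le_rpow_of_exponent_le (Nat.one_le_cast.2 hj) hα

end OmegaFn

theorem complexity_dichotomy_polynomial_scale_general {σ : ℕ → ℝ} (hσ : ∀ j, σ j ≠ 0) {α : ℝ}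
    (hgrowth : (fun j ↦ σ j ^ 2) =Θ[atTop] fun j : ℕ ↦ (j : ℝ) ^ α) :
    (1 < α → ∀ ε ∈ Ioo (0 : ℝ) 1, ∃ C : ℕ, ∀ d : ℕ,
        avgComplexity (fun j ↦ omegaFn (σ j)) d ε ≤ C)
    ∧ (α ≤ 1 → ∀ ε ∈ Ioo (0 : ℝ) 1,
        Tendsto (fun d : ℕ ↦ avgComplexity (fun j ↦ omegaFn (σ j)) d ε) atTop atTop) := by
  have h0 : ∀ j, 0 ≤ omegaFn (σ j) := fun j ↦ (omegaFn_pos _).le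
  have h1 : ∀ j, omegaFn (σ j) < 1 := fun j ↦ omegaFn_lt_one (hσ j)
  refine ⟨fun hα ε hε ↦ ?_, fun hα ε hε ↦ ?_⟩
  · exact exists_forall_avgComplexity_le_of_summable h0 h1
      (summable_omegaFn_of_rpow_isBigO hα hgrowth.2) hε.1
  · exact tendsto_avgComplexity_atTop_of_not_summable h0 h1
      (not_summable_omegaFn_of_isBigO_natCast (hgrowth.1.trans (rpow_isBigO_natCast hα))) hε

/-- If `σ_j² ~ β j^α` then for `α > 1` the complexity is bounded in `d` for every fixed
`ε ∈ (0,1)`, while for `α ≤ 1` it tends to infinity as `d → ∞` for every fixed `ε ∈ (0,1)`. -/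
theorem complexity_dichotomy_polynomial_scale (σ : ℕ → ℝ) (hσ : ∀ j, 0 < σ j)
    (α β : ℝ) (hα : 0 < α) (hβ : 0 < β)
    (hasymp : Tendsto (fun j : ℕ => (σ j) ^ 2 / (β * (j : ℝ) ^ α)) atTop (nhds 1)) :
    (1 < α → ∀ ε ∈ Set.Ioo (0 : ℝ) 1, ∃ C : ℕ, ∀ d : ℕ,
        avgComplexity (fun j => omegaFn (σ j)) d ε ≤ C)
    ∧ (α ≤ 1 → ∀ ε ∈ Set.Ioo (0 : ℝ) 1,
        Tendsto (fun d : ℕ => avgComplexity (fun j => omegaFn (σ j)) d ε) atTop atTop) :=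
  complexity_dichotomy_polynomial_scale_general (fun j ↦ (hσ j).ne')
    ((Asymptotics.isEquivalent_of_tendsto_one hasymp).isTheta.of_const_mul_right hβ.ne')
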